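/- Let T_t = e^{−tA} be a semigroup of self-adjoint unital trace-preserving completely positive maps on M_n(ℂ), E the conditional expectation onto the fixed point algebra, f : (0,∞) → (0,∞) C¹, and λ > 0. Then the following are equivalent: (1) λ d^f(ρ‖E(ρ)) ≤ I_A^f(ρ) for all positive definite ρ; (2) d^f(T_t(ρ)‖E(ρ)) ≤ e^{−λt} d^f(ρ‖E(ρ)) for all positive definite ρ and all t ≥ 0. -/

import Mathlib

open Matrix
open scoped ComplexOrder

/-- Bregman relative entropy `d^f(ρ‖σ) = tr(f(ρ) - f(σ) - (ρ - σ) f'(σ))`. -/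
noncomputable def bregman {n : ℕ} (f f' : ℝ → ℝ) (ρ σ : Matrix (Fin n) (Fin n) ℂ) : ℂ :=
  Matrix.trace (cfc f ρ - cfc f σ - (ρ - σ) * cfc f' σ)

/-- The amplification `id_{M_k} ⊗ β` of a linear map on a matrix algebra. -/
def amplify {n : ℕ} (β : Matrix (Fin n) (Fin n) ℂ →ₗ[ℂ] Matrix (Fin n) (Fin n) ℂ) (k : ℕ)
    (x : Matrix (Fin k × Fin n) (Fin k × Fin n) ℂ) :
    Matrix (Fin k × Fin n) (Fin k × Fin n) ℂ :=
  Matrix.of fun p q => β (Matrix.of fun a b => x (p.1, a) (q.1, b)) p.2 q.2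

/-- A linear map on a matrix algebra is completely positive if all its amplifications
preserve positive semidefiniteness. -/
def IsCP {n : ℕ} (β : Matrix (Fin n) (Fin n) ℂ →ₗ[ℂ] Matrix (Fin n) (Fin n) ℂ) : Prop :=
  ∀ (k : ℕ) (x : Matrix (Fin k × Fin n) (Fin k × Fin n) ℂ), x.PosSemidef →
    (amplify β k x).PosSemidef

/-- The `f`-Fisher information `I_A^f(ρ) = tr(A(ρ) f'(ρ))` of a generator `A`. -/
noncomputable def fisherInfo {n : ℕ} (A : Matrix (Fin n) (Fin n) ℂ →ₗ[ℂ] Matrix (Fin n) (Fin n) ℂ)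
    (f' : ℝ → ℝ) (ρ : Matrix (Fin n) (Fin n) ℂ) : ℝ :=
  ((A ρ * cfc f' ρ).trace).re

/-!
A self-adjoint unital positive map `β` satisfies
`2 re tr(g(X) (1 - β)(g(X))) = ∑ (g x - g y)² re tr(β(P_x) P_y)` with nonnegative weights, where
the `P_x` are the spectral projections of `X`. Since `X` has finite spectrum, `(g x - g y)²` is at
most a multiple of `(x - y)²`, so a fixed point `X` of `β` has fixed functions `g(X)`. For `σ = E ρ`
this makes `tr((T_t ρ - σ) f'(σ))` independent of `t`. The same spectral sums, with `β = id`, show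
that `tr f` has derivative `tr(f'(X) ·)` for merely differentiable `f`. Hence
`d/dt d^f(T_t ρ‖σ) = -I_A^f(T_t ρ)`: Gronwall's inequality turns the Sobolev inequality into decay,
and differentiating the decay at `t = 0` gives it back.
-/

section SpectralPairing

variable {m n 𝕜 : Type*} [Fintype m] [DecidableEq m] [Fintype n] [DecidableEq n] [RCLike 𝕜]

lemma continuousOn_real_spectrum (X : Matrix n n 𝕜) (g : ℝ → ℝ) :
    ContinuousOn g (spectrum ℝ X) :=
  X.finite_real_spectrum.continuousOn g

/-- The spectral projection of the Hermitian matrix `X` at `x`. It is zero when `x` is not an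
eigenvalue, and also when `X` is not Hermitian. -/
noncomputable def spectralProjection (X : Matrix n n 𝕜) (x : ℝ) : Matrix n n 𝕜 :=
  cfc (Set.indicator {x} 1) X

open scoped MatrixOrder in
lemma posSemidef_spectralProjection (X : Matrix n n 𝕜) (x : ℝ) :
    (spectralProjection X x).PosSemidef :=
  (cfc_nonneg fun _ _ => Set.indicator_nonneg (fun _ _ => zero_le_one) _).posSemidef

lemma spectralProjection_mul_self (X : Matrix n n 𝕜) (x : ℝ) :
    spectralProjection X x * spectralProjection X x = spectralProjection X x := by
  have hc := continuousOn_real_spectrum X (Set.indicator {x} 1)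
  rw [spectralProjection, ← cfc_mul _ _ X hc hc]
  congr 1
  ext t
  by_cases ht : t = x <;> simp [ht]

lemma cfc_eq_sum_smul_spectralProjection (X : Matrix n n 𝕜) (φ : ℝ → ℝ) :
    cfc φ X = ∑ x ∈ X.finite_real_spectrum.toFinset, φ x • spectralProjection X x := by
  have hφ : (spectrum ℝ X).EqOn φ
      (∑ x ∈ X.finite_real_spectrum.toFinset, fun t => φ x • Set.indicator {x} 1 t) := by
    intro t ht
    rw [Finset.sum_apply, Finset.sum_eq_single_of_mem t (by simpa using ht)]
    · simp
    · intro x _ hx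
      simp [hx.symm]
  rw [cfc_congr hφ, cfc_sum _ _ _ fun _ _ => continuousOn_real_spectrum X _]
  exact Finset.sum_congr rfl fun x _ => cfc_smul _ _ X (continuousOn_real_spectrum X _)

/-- The double sum `∑ F(x, y) re tr(β(P_x) Q_y)` over the spectral projections `P_x` of `X` and
`Q_y` of `Y`, i.e. a traced double operator integral, as a linear functional of the symbol `F`.
It reduces trace inequalities for pairs of non-commuting matrices to inequalities between symbols
on the product of the spectra. -/
noncomputable def spectralPairing (β : Matrix m m 𝕜 →ₗ[𝕜] Matrix n n 𝕜) (X : Matrix m m 𝕜)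
    (Y : Matrix n n 𝕜) : (ℝ → ℝ → ℝ) →ₗ[ℝ] ℝ where
  toFun F := ∑ x ∈ X.finite_real_spectrum.toFinset, ∑ y ∈ Y.finite_real_spectrum.toFinset,
    RCLike.re (β (spectralProjection X x) * spectralProjection Y y).trace * F x y
  map_add' F G := by simp only [Pi.add_apply, mul_add, Finset.sum_add_distrib]
  map_smul' c F := by
    simp only [Pi.smul_apply, smul_eq_mul, mul_left_comm _ c, Finset.mul_sum, RingHom.id_apply]

variable {β : Matrix m m 𝕜 →ₗ[𝕜] Matrix n n 𝕜} {X : Matrix m m 𝕜} {Y : Matrix n n 𝕜}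

lemma spectralPairing_apply (F : ℝ → ℝ → ℝ) :
    spectralPairing β X Y F = ∑ x ∈ X.finite_real_spectrum.toFinset,
      ∑ y ∈ Y.finite_real_spectrum.toFinset,
        RCLike.re (β (spectralProjection X x) * spectralProjection Y y).trace * F x y := rfl

lemma spectralPairing_mul (φ ψ : ℝ → ℝ) :
    spectralPairing β X Y (fun x y => φ x * ψ y) =
      RCLike.re (β (cfc φ X) * cfc ψ Y).trace := by
  rw [spectralPairing_apply, cfc_eq_sum_smul_spectralProjection X φ,
    cfc_eq_sum_smul_spectralProjection Y ψ]
  simp only [RCLike.real_smul_eq_coe_smul (K := 𝕜), map_sum, map_smul, Finset.sum_mul_sum,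
    trace_sum, smul_mul_smul_comm, trace_smul, smul_eq_mul, ← RCLike.ofReal_mul,
    RCLike.re_ofReal_mul]
  exact Finset.sum_congr rfl fun x _ => Finset.sum_congr rfl fun y _ => mul_comm _ _

lemma spectralPairing_left (hY : Y.IsHermitian) (φ : ℝ → ℝ) :
    spectralPairing β X Y (fun x _ => φ x) = RCLike.re (β (cfc φ X)).trace := by
  simpa [cfc_one ℝ Y hY.isSelfAdjoint] using spectralPairing_mul (β := β) (X := X) (Y := Y) φ 1

lemma spectralPairing_right (hX : X.IsHermitian) (ψ : ℝ → ℝ) :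
    spectralPairing β X Y (fun _ y => ψ y) = RCLike.re (β 1 * cfc ψ Y).trace := by
  simpa [cfc_one ℝ X hX.isSelfAdjoint] using spectralPairing_mul (β := β) (X := X) (Y := Y) 1 ψ

lemma spectralPairing_sub_sq (hX : X.IsHermitian) (hY : Y.IsHermitian) (φ ψ : ℝ → ℝ) :
    spectralPairing β X Y (fun x y => (φ x - ψ y) ^ 2) =
      RCLike.re (β (cfc φ X * cfc φ X)).trace - 2 * RCLike.re (β (cfc φ X) * cfc ψ Y).trace +
        RCLike.re (β 1 * (cfc ψ Y * cfc ψ Y)).trace := by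
  have hF : (fun x y => (φ x - ψ y) ^ 2) = (fun x _ => φ x * φ x) -
      (2 : ℝ) • (fun x y => φ x * ψ y) + fun _ y => ψ y * ψ y := by
    ext x y
    simp only [Pi.add_apply, Pi.sub_apply, Pi.smul_apply, smul_eq_mul]
    ring
  rw [hF, map_add, map_sub, map_smul, spectralPairing_left hY, spectralPairing_mul,
    spectralPairing_right hX, smul_eq_mul,
    cfc_mul _ _ X (continuousOn_real_spectrum X _) (continuousOn_real_spectrum X _),
    cfc_mul _ _ Y (continuousOn_real_spectrum Y _) (continuousOn_real_spectrum Y _)]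

lemma re_trace_mul_spectralProjection_nonneg {S : Matrix n n 𝕜} (hS : S.PosSemidef)
    (Y : Matrix n n 𝕜) (y : ℝ) : 0 ≤ RCLike.re (S * spectralProjection Y y).trace := by
  have hP := posSemidef_spectralProjection Y y
  have h := (hS.conjTranspose_mul_mul_same (spectralProjection Y y)).trace_nonneg
  rw [hP.isHermitian.eq, mul_assoc, trace_mul_comm, mul_assoc, spectralProjection_mul_self] at h
  exact (RCLike.nonneg_iff.mp h).1

lemma spectralPairing_mono (hβ : ∀ Z, Z.PosSemidef → (β Z).PosSemidef)
    {F G : ℝ → ℝ → ℝ} (hFG : ∀ x ∈ spectrum ℝ X, ∀ y ∈ spectrum ℝ Y, F x y ≤ G x y) :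
    spectralPairing β X Y F ≤ spectralPairing β X Y G := by
  simp only [spectralPairing_apply]
  refine Finset.sum_le_sum fun x hx => Finset.sum_le_sum fun y hy => ?_
  refine mul_le_mul_of_nonneg_left (hFG x (by simpa using hx) y (by simpa using hy)) ?_
  exact re_trace_mul_spectralProjection_nonneg (hβ _ (posSemidef_spectralProjection X x)) Y y

lemma abs_spectralPairing_le (hβ : ∀ Z, Z.PosSemidef → (β Z).PosSemidef)
    {F G : ℝ → ℝ → ℝ} (hFG : ∀ x ∈ spectrum ℝ X, ∀ y ∈ spectrum ℝ Y, |F x y| ≤ G x y) :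
    |spectralPairing β X Y F| ≤ spectralPairing β X Y G := by
  refine abs_le'.mpr ⟨spectralPairing_mono hβ fun x hx y hy => (abs_le'.mp (hFG x hx y hy)).1, ?_⟩
  rw [← map_neg]
  exact spectralPairing_mono hβ fun x hx y hy => (abs_le'.mp (hFG x hx y hy)).2

lemma spectralPairing_id_taylor {X Y : Matrix n n 𝕜} (hX : X.IsHermitian) (hY : Y.IsHermitian)
    (f f' : ℝ → ℝ) :
    spectralPairing LinearMap.id X Y (fun x y => f y - f x - f' x * (y - x)) =
      RCLike.re (cfc f Y).trace - RCLike.re (cfc f X).trace -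
        RCLike.re (cfc f' X * (Y - X)).trace := by
  have hF : (fun x y => f y - f x - f' x * (y - x)) = (fun _ y => f y) - (fun x _ => f x) -
      ((fun x y => f' x * y) - fun x _ => f' x * x) := by
    ext x y
    simp only [Pi.sub_apply, mul_sub]
  have hmul := spectralPairing_mul (β := LinearMap.id) (X := X) (Y := Y) f' fun y => y
  rw [hF, map_sub, map_sub, map_sub, hmul, spectralPairing_left hY, spectralPairing_left hY,
    spectralPairing_right hX,
    cfc_mul _ _ X (continuousOn_real_spectrum X _) (continuousOn_real_spectrum X _),
    cfc_id' ℝ X hX.isSelfAdjoint, cfc_id' ℝ Y hY.isSelfAdjoint]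
  simp only [LinearMap.id_apply, one_mul, mul_sub, trace_sub, map_sub]

lemma spectralPairing_id_sub_sq {X Y : Matrix n n 𝕜} (hX : X.IsHermitian) (hY : Y.IsHermitian) :
    spectralPairing LinearMap.id X Y (fun x y => (x - y) ^ 2) =
      RCLike.re ((Y - X) * (Y - X)).trace := by
  have hsq := spectralPairing_sub_sq (β := LinearMap.id) hX hY (fun x => x) (fun y => y)
  rw [cfc_id' ℝ X hX.isSelfAdjoint, cfc_id' ℝ Y hY.isSelfAdjoint] at hsq
  rw [hsq]
  simp only [LinearMap.id_apply, one_mul, sub_mul, mul_sub, trace_sub, map_sub,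
    trace_mul_comm Y X]
  ring

end SpectralPairing

section TraceDerivative

open Filter Topology
open scoped Matrix.Norms.Frobenius

/- For `x₀ ≠ x` this is not a first-order expansion: the quadratic term absorbs the whole error. -/
lemma eventually_abs_sub_sub_le {f : ℝ → ℝ} {d x x₀ ε : ℝ} (hx : HasDerivAt f d x)
    (hx₀ : ContinuousAt f x₀) (hε : 0 < ε) :
    ∀ᶠ K in atTop, ∀ᶠ y in 𝓝 x₀, |f y - f x - d * (y - x)| ≤ ε * |y - x| + K * (y - x) ^ 2 := by
  rcases eq_or_ne x₀ x with rfl | hne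
  · filter_upwards [eventually_ge_atTop 0] with K hK
    filter_upwards [(hasDerivAt_iff_isLittleO.mp hx).def hε] with y hy
    rw [smul_eq_mul, mul_comm, Real.norm_eq_abs, Real.norm_eq_abs] at hy
    exact hy.trans (le_add_of_nonneg_right (by positivity))
  · have hpos : 0 < (x₀ - x) ^ 2 := sq_pos_of_ne_zero (sub_ne_zero.mpr hne)
    filter_upwards [eventually_gt_atTop (|f x₀ - f x - d * (x₀ - x)| / (x₀ - x) ^ 2)] with K hK
    have hlt : |f x₀ - f x - d * (x₀ - x)| < ε * |x₀ - x| + K * (x₀ - x) ^ 2 :=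
      ((div_lt_iff₀ hpos).mp hK).trans_le (le_add_of_nonneg_left (by positivity))
    have hl : ContinuousAt (fun y => |f y - f x - d * (y - x)|) x₀ := by fun_prop
    have hr : ContinuousAt (fun y => ε * |y - x| + K * (y - x) ^ 2) x₀ := by fun_prop
    exact (hl.eventually_lt hr hlt).mono fun _ => le_of_lt

variable {n 𝕜 : Type*} [Fintype n] [DecidableEq n] [RCLike 𝕜] {X Y : Matrix n n 𝕜} {f f' : ℝ → ℝ}

lemma abs_re_trace_cfc_sub_sub_le (hX : X.IsHermitian) (hY : Y.IsHermitian) {ε K s : ℝ}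
    (hε : 0 ≤ ε) (hs : 0 < s)
    (h : ∀ x ∈ spectrum ℝ X, ∀ y ∈ spectrum ℝ Y,
      |f y - f x - f' x * (y - x)| ≤ ε * |y - x| + K * (y - x) ^ 2) :
    |RCLike.re (cfc f Y).trace - RCLike.re (cfc f X).trace -
        RCLike.re (cfc f' X * (Y - X)).trace| ≤
      ε * s * Fintype.card n + (ε / s + K) * RCLike.re ((Y - X) * (Y - X)).trace := by
  let L : (ℝ → ℝ → ℝ) →ₗ[ℝ] ℝ := spectralPairing LinearMap.id X Y
  have hcard : (Fintype.card n : ℝ) = L fun _ _ => 1 := by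
    rw [spectralPairing_right hX, cfc_const_one ℝ Y hY.isSelfAdjoint]
    simp
  rw [← spectralPairing_id_taylor hX hY, ← spectralPairing_id_sub_sq hX hY, hcard, ← smul_eq_mul,
    ← smul_eq_mul (ε / s + K), ← map_smul, ← map_smul, ← map_add]
  refine abs_spectralPairing_le (fun _ hZ => hZ) fun x hx y hy => (h x hx y hy).trans ?_
  -- Unlike `|x - y|`, the symbols `1` and `(x - y) ^ 2` have computable pairings.
  have hAMGM : ε * |y - x| ≤ ε * (s + (x - y) ^ 2 / s) := by
    gcongr
    rw [← sq_abs, abs_sub_comm, ← mul_le_mul_iff_of_pos_right hs, add_mul,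
      div_mul_cancel₀ _ hs.ne']
    nlinarith [sq_nonneg (s - |x - y|), mul_nonneg hs.le (abs_nonneg (x - y))]
  simp only [Pi.add_apply, Pi.smul_apply, smul_eq_mul]
  linear_combination hAMGM

lemma re_trace_star_mul_self_eq_norm_sq (X : Matrix n n 𝕜) :
    RCLike.re (star X * X).trace = ‖X‖ ^ 2 := by
  rw [frobenius_norm_def, ← Real.sqrt_eq_rpow, Real.sq_sqrt (by positivity), Finset.sum_comm]
  simp only [star_eq_conjTranspose, trace, diag, mul_apply, conjTranspose_apply, map_sum,
    Real.rpow_two, RCLike.star_def, RCLike.conj_mul, ← RCLike.ofReal_pow, RCLike.ofReal_re]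

/-- The real functional `D ↦ re tr(C D)`; with `C = f'(X)` it is the derivative of `re tr f` at
`X`. -/
noncomputable def reTraceMul (C : Matrix n n 𝕜) : Matrix n n 𝕜 →L[ℝ] ℝ :=
  LinearMap.toContinuousLinearMap
    (RCLike.reLm ∘ₗ traceLinearMap n ℝ 𝕜 ∘ₗ LinearMap.mulLeft ℝ C)

@[simp]
lemma reTraceMul_apply (C D : Matrix n n 𝕜) : reTraceMul C D = RCLike.re (C * D).trace := rfl

lemma exists_eventually_spectrum_abs_sub_sub_le
    (hf : ∀ x ∈ spectrum ℝ X, HasDerivAt f (f' x) x) {ε : ℝ} (hε : 0 < ε) :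
    ∃ K, ∀ᶠ Y in 𝓝 X, ∀ x ∈ spectrum ℝ X, ∀ y ∈ spectrum ℝ Y,
      |f y - f x - f' x * (y - x)| ≤ ε * |y - x| + K * (y - x) ^ 2 := by
  have hK : ∀ᶠ K in atTop, ∀ x₀ ∈ spectrum ℝ X, ∀ x ∈ spectrum ℝ X, ∀ᶠ y in 𝓝 x₀,
      |f y - f x - f' x * (y - x)| ≤ ε * |y - x| + K * (y - x) ^ 2 :=
    X.finite_real_spectrum.eventually_all.mpr fun x₀ hx₀ =>
      X.finite_real_spectrum.eventually_all.mpr fun x hx =>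
        eventually_abs_sub_sub_le (hf x hx) (hf x₀ hx₀).continuousAt hε
  obtain ⟨K, hK⟩ := hK.exists
  have hnhds : ∀ᶠ y in 𝓝ˢ (spectrum ℝ X), ∀ x ∈ spectrum ℝ X,
      |f y - f x - f' x * (y - x)| ≤ ε * |y - x| + K * (y - x) ^ 2 :=
    eventually_nhdsSet_iff_forall.mpr fun x₀ hx₀ =>
      X.finite_real_spectrum.eventually_all.mpr (hK x₀ hx₀)
  refine ⟨K, ?_⟩
  filter_upwards [upperHemicontinuous_spectrum ℝ _ X _ hnhds] with Y hY x hx y hy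
  exact subset_of_mem_nhdsSet hY hy x hx

theorem hasFDerivWithinAt_re_trace_cfc (hX : X.IsHermitian)
    (hf : ∀ x ∈ spectrum ℝ X, HasDerivAt f (f' x) x) :
    HasFDerivWithinAt (fun Y => RCLike.re (cfc f Y).trace) (reTraceMul (cfc f' X))
      {Y | Y.IsHermitian} X := by
  refine .of_isLittleO (Asymptotics.isLittleO_iff.mpr fun c hc => ?_)
  have hN : 0 < (Fintype.card n + 2 : ℝ) := by positivity
  obtain ⟨K, hK⟩ := exists_eventually_spectrum_abs_sub_sub_le hf
    (ε := c / 2 / (Fintype.card n + 2)) (by positivity)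
  have hsmall : ∀ᶠ Y in 𝓝 X, K * ‖Y - X‖ < c / 2 := by
    have hcont : ContinuousAt (fun Y => K * ‖Y - X‖) X := by fun_prop
    exact hcont.eventually_lt_const (by simpa using by positivity)
  filter_upwards [mem_nhdsWithin_of_mem_nhds hK, mem_nhdsWithin_of_mem_nhds hsmall,
    self_mem_nhdsWithin] with Y htaylor hYX hY
  change |RCLike.re (cfc f Y).trace - RCLike.re (cfc f X).trace -
    RCLike.re (cfc f' X * (Y - X)).trace| ≤ c * ‖Y - X‖
  rcases eq_or_ne Y X with rfl | hne
  · simp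
  have hr : 0 < ‖Y - X‖ := norm_sub_pos_iff.mpr hne
  set ε := c / 2 / (Fintype.card n + 2)
  set r := ‖Y - X‖
  calc |RCLike.re (cfc f Y).trace - RCLike.re (cfc f X).trace -
        RCLike.re (cfc f' X * (Y - X)).trace|
      ≤ ε * r * Fintype.card n + (ε / r + K) * RCLike.re ((Y - X) * (Y - X)).trace :=
        abs_re_trace_cfc_sub_sub_le hX hY (by positivity) hr htaylor
    _ = ε * r * Fintype.card n + (ε / r + K) * r ^ 2 := by
        rw [← re_trace_star_mul_self_eq_norm_sq, star_eq_conjTranspose, (hY.sub hX).eq]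
    _ = (ε * (Fintype.card n + 1) + K * r) * r := by
        field_simp
        ring
    _ ≤ c * r := by
        gcongr
        have hεN : ε * (Fintype.card n + 2) = c / 2 := div_mul_cancel₀ _ hN.ne'
        have hε0 : 0 ≤ ε := by positivity
        linarith

end TraceDerivative

section SymmetricMarkov

variable {n 𝕜 : Type*} [Fintype n] [DecidableEq n] [RCLike 𝕜]

/-- A symmetric Markov map: positive, unital and self-adjoint for the trace inner product.
Positivity is required only at the first matrix level. -/
structure IsSymmetricMarkov (β : Matrix n n 𝕜 →ₗ[𝕜] Matrix n n 𝕜) : Prop where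
  posSemidef : ∀ x, x.PosSemidef → (β x).PosSemidef
  map_one : β 1 = 1
  trace_star_mul : ∀ x y, (star (β x) * y).trace = (star x * β y).trace

/-- The Dirichlet form `re tr(Z* (Z - β Z))` of `β`. For Hermitian `Z` and a symmetric Markov map it
is nonnegative, and it vanishes exactly at the fixed points of `β`. -/
noncomputable def dirichletForm (β : Matrix n n 𝕜 →ₗ[𝕜] Matrix n n 𝕜) (Z : Matrix n n 𝕜) : ℝ :=
  RCLike.re (star Z * (Z - β Z)).trace

namespace IsSymmetricMarkov

variable {β : Matrix n n 𝕜 →ₗ[𝕜] Matrix n n 𝕜}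

lemma comp_self (hβ : IsSymmetricMarkov β) : IsSymmetricMarkov (β ∘ₗ β) where
  posSemidef x hx := hβ.posSemidef _ (hβ.posSemidef x hx)
  map_one := by rw [LinearMap.comp_apply, hβ.map_one, hβ.map_one]
  trace_star_mul x y := by
    rw [LinearMap.comp_apply, LinearMap.comp_apply, hβ.trace_star_mul, hβ.trace_star_mul]

lemma trace_map (hβ : IsSymmetricMarkov β) (x : Matrix n n 𝕜) : (β x).trace = x.trace := by
  simpa [hβ.map_one] using (hβ.trace_star_mul 1 x).symm

open scoped MatrixOrder in
lemma posDef (hβ : IsSymmetricMarkov β) {x : Matrix n n 𝕜} (hx : x.PosDef) : (β x).PosDef := by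
  cases isEmpty_or_nonempty n
  · rwa [Subsingleton.elim (β x) x]
  obtain ⟨c, hc, hcx⟩ := (CFC.exists_pos_algebraMap_le_iff hx.isHermitian.isSelfAdjoint).mpr
    ((StarOrderedRing.isStrictlyPositive_iff_spectrum_pos x).mp hx.isStrictlyPositive)
  have hsplit : β x = c • 1 + β (x - algebraMap ℝ _ c) := by
    rw [map_sub, Algebra.algebraMap_eq_smul_one, RCLike.real_smul_eq_coe_smul (K := 𝕜) c,
      map_smul, hβ.map_one, add_sub_cancel]
  rw [hsplit]
  exact (PosDef.one.smul hc).add_posSemidef (hβ.posSemidef _ hcx)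

lemma two_mul_dirichletForm_cfc (hβ : IsSymmetricMarkov β) {X : Matrix n n 𝕜} (hX : X.IsHermitian)
    (g : ℝ → ℝ) : 2 * dirichletForm β (cfc g X) =
      spectralPairing β X X fun x y => (g x - g y) ^ 2 := by
  rw [spectralPairing_sub_sq hX hX, hβ.trace_map, hβ.map_one, one_mul, dirichletForm,
    (cfc_predicate g X : IsSelfAdjoint _).star_eq, mul_sub, trace_sub, map_sub,
    trace_mul_comm _ (β _)]
  ring

lemma dirichletForm_cfc_nonneg (hβ : IsSymmetricMarkov β) {X : Matrix n n 𝕜} (hX : X.IsHermitian)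
    (g : ℝ → ℝ) : 0 ≤ dirichletForm β (cfc g X) := by
  have h := spectralPairing_mono hβ.posSemidef (X := X) (Y := X) (F := 0)
    (G := fun x y => (g x - g y) ^ 2) fun _ _ _ _ => sq_nonneg _
  rw [map_zero, ← hβ.two_mul_dirichletForm_cfc hX] at h
  linarith

lemma dirichletForm_cfc_eq_zero (hβ : IsSymmetricMarkov β) {X : Matrix n n 𝕜}
    (hX : X.IsHermitian) (hfix : β X = X) (g : ℝ → ℝ) : dirichletForm β (cfc g X) = 0 := by
  have hlip : ∀ᶠ C in Filter.atTop, ∀ x ∈ spectrum ℝ X, ∀ y ∈ spectrum ℝ X,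
      (g x - g y) ^ 2 ≤ C * (x - y) ^ 2 := by
    refine X.finite_real_spectrum.eventually_all.mpr fun x _ =>
      X.finite_real_spectrum.eventually_all.mpr fun y _ => ?_
    rcases eq_or_ne x y with rfl | hne
    · simp
    · filter_upwards [Filter.eventually_ge_atTop ((g x - g y) ^ 2 / (x - y) ^ 2)] with C hC
      exact (div_le_iff₀ (sq_pos_of_ne_zero (sub_ne_zero.mpr hne))).mp hC
  obtain ⟨C, hC⟩ := hlip.exists
  have hle := spectralPairing_mono hβ.posSemidef hC
  have hzero : spectralPairing β X X (fun x y => C * (x - y) ^ 2) = 0 := by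
    have hX0 := hβ.two_mul_dirichletForm_cfc hX fun x => x
    rw [cfc_id' ℝ X hX.isSelfAdjoint, dirichletForm, hfix, sub_self, mul_zero, trace_zero,
      map_zero, mul_zero] at hX0
    exact (map_smul (spectralPairing β X X) C fun x y => (x - y) ^ 2).trans
      (by rw [← hX0, smul_zero])
  rw [hzero, ← hβ.two_mul_dirichletForm_cfc hX] at hle
  linarith [hβ.dirichletForm_cfc_nonneg hX g]

open scoped Matrix.Norms.Frobenius in
lemma map_eq_self_of_dirichletForm_eq_zero (hβ : IsSymmetricMarkov β) {Z : Matrix n n 𝕜}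
    (hZ : Z.IsHermitian) (h : dirichletForm β Z = 0) : β Z = Z := by
  have hsq : RCLike.re (star (Z - β Z) * (Z - β Z)).trace =
      2 * dirichletForm β Z - dirichletForm (β ∘ₗ β) Z := by
    simp only [dirichletForm, LinearMap.comp_apply, star_sub, sub_mul, mul_sub, trace_sub,
      map_sub, hβ.trace_star_mul]
    ring
  have hnonneg := hβ.comp_self.dirichletForm_cfc_nonneg hZ fun x => x
  rw [cfc_id' ℝ Z hZ.isSelfAdjoint] at hnonneg
  have hnorm : ‖Z - β Z‖ ^ 2 ≤ 0 := by
    rw [← re_trace_star_mul_self_eq_norm_sq, hsq]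
    linarith
  exact (sub_eq_zero.mp (by simpa using hnorm)).symm

lemma map_cfc_of_map_eq_self (hβ : IsSymmetricMarkov β) {X : Matrix n n 𝕜} (hfix : β X = X)
    (g : ℝ → ℝ) : β (cfc g X) = cfc g X := by
  by_cases hX : X.IsHermitian
  · exact hβ.map_eq_self_of_dirichletForm_eq_zero (cfc_predicate g X)
      (hβ.dirichletForm_cfc_eq_zero hX hfix g)
  · rw [cfc_apply_of_not_predicate (p := IsSelfAdjoint) X hX, map_zero]

lemma trace_map_mul_cfc (hβ : IsSymmetricMarkov β) {ρ σ : Matrix n n 𝕜} (hρ : ρ.PosSemidef)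
    (hσ : β σ = σ) (g : ℝ → ℝ) : (β ρ * cfc g σ).trace = (ρ * cfc g σ).trace := by
  have h := hβ.trace_star_mul ρ (cfc g σ)
  rwa [hβ.map_cfc_of_map_eq_self hσ, star_eq_conjTranspose, star_eq_conjTranspose,
    (hβ.posSemidef ρ hρ).isHermitian.eq, hρ.isHermitian.eq] at h

end IsSymmetricMarkov

end SymmetricMarkov

section Gronwall

variable {φ φ' : ℝ → ℝ} {c : ℝ}

lemma le_exp_mul_of_deriv_right_le (hφ : ∀ t, 0 ≤ t → HasDerivWithinAt φ (φ' t) (Set.Ici 0) t)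
    (hle : ∀ t, 0 ≤ t → φ' t ≤ c * φ t) {t : ℝ} (ht : 0 ≤ t) :
    φ t ≤ Real.exp (c * t) * φ 0 := by
  have hcont : ContinuousOn φ (Set.Icc 0 t) := fun s hs =>
    (hφ s hs.1).continuousWithinAt.mono Set.Icc_subset_Ici_self
  have h := le_gronwallBound_of_liminf_deriv_right_le (ε := 0) hcont
    (fun s hs _ => ((hφ s hs.1).mono (Set.Ici_subset_Ici.mpr hs.1)).liminf_right_slope_le) le_rfl
    (fun s hs => (hle s hs.1).trans_eq (add_zero _).symm) t ⟨ht, le_rfl⟩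
  rwa [gronwallBound_ε0, sub_zero, mul_comm] at h

lemma deriv_right_le_of_le_exp_mul {d : ℝ} (hφ : HasDerivWithinAt φ d (Set.Ici 0) 0)
    (hle : ∀ t, 0 ≤ t → φ t ≤ Real.exp (c * t) * φ 0) : d ≤ c * φ 0 := by
  have hexp : HasDerivAt (fun t => Real.exp (c * t) * φ 0) (c * φ 0) 0 := by
    simpa using (((hasDerivAt_id (0 : ℝ)).const_mul c).exp).mul_const (φ 0)
  have hmax : IsLocalMaxOn (fun t => φ t - Real.exp (c * t) * φ 0) (Set.Ici 0) 0 := by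
    filter_upwards [self_mem_nhdsWithin] with t ht
    simpa using hle t ht
  have hone : (1 : ℝ) ∈ posTangentConeAt (Set.Ici 0) 0 :=
    mem_posTangentConeAt_of_segment_subset (by simp [segment_eq_Icc, Set.Icc_subset_Ici_self])
  simpa using hmax.hasFDerivWithinAt_nonpos (hφ.sub hexp.hasDerivWithinAt).hasFDerivWithinAt hone

end Gronwall

section EntropyDecay

variable {n : ℕ} {T : ℝ → Matrix (Fin n) (Fin n) ℂ →ₗ[ℂ] Matrix (Fin n) (Fin n) ℂ}
  {A E : Matrix (Fin n) (Fin n) ℂ →ₗ[ℂ] Matrix (Fin n) (Fin n) ℂ}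
  {ρ σ : Matrix (Fin n) (Fin n) ℂ} {f f' : ℝ → ℝ}

/-- `E` is the conditional expectation onto the fixed points of `(T t)_{t ≥ 0}`: its range consists
of fixed points, it is constant along orbits, and it fixes every fixed point. -/
structure IsFixedPointExpectation {R V : Type*} [Semiring R] [AddCommMonoid V] [Module R V]
    (T : ℝ → V →ₗ[R] V) (E : V →ₗ[R] V) : Prop where
  map_apply : ∀ t, 0 ≤ t → ∀ x, T t (E x) = E x
  apply_map : ∀ t, 0 ≤ t → ∀ x, E (T t x) = E x
  apply_of_fixed : ∀ x, (∀ t, 0 ≤ t → T t x = x) → E x = x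

lemma IsCP.posSemidef {β : Matrix (Fin n) (Fin n) ℂ →ₗ[ℂ] Matrix (Fin n) (Fin n) ℂ} (hβ : IsCP β)
    (hρ : ρ.PosSemidef) : (β ρ).PosSemidef :=
  (hβ 1 (ρ.submatrix Prod.snd Prod.snd) (hρ.submatrix Prod.snd)).submatrix (Prod.mk 0)

open scoped MatrixOrder Matrix.Norms.Frobenius in
lemma hasDerivWithinAt_re_bregman (hT : ∀ t, 0 ≤ t → IsSymmetricMarkov (T t))
    (hρ : ρ.PosDef) (hσ : ∀ t, 0 ≤ t → T t σ = σ)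
    (hf : ∀ x ∈ Set.Ioi (0 : ℝ), HasDerivAt f (f' x) x) {t : ℝ} (ht : 0 ≤ t)
    (hgen : HasDerivWithinAt (fun s => T s ρ) (-(A (T t ρ))) (Set.Ici 0) t) :
    HasDerivWithinAt (fun s => (bregman f f' (T s ρ) σ).re) (-(fisherInfo A f' (T t ρ)))
      (Set.Ici 0) t := by
  have hbregman : ∀ s ∈ Set.Ici (0 : ℝ), (bregman f f' (T s ρ) σ).re =
      (cfc f (T s ρ)).trace.re - (cfc f σ + (ρ - σ) * cfc f' σ).trace.re := by
    intro s hs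
    simp only [bregman, sub_mul, trace_sub, trace_add, Complex.sub_re, Complex.add_re,
      (hT s hs).trace_map_mul_cfc hρ.posSemidef (hσ s hs)]
    ring
  have hpos := (hT t ht).posDef hρ
  have htrace := (hasFDerivWithinAt_re_trace_cfc hpos.isHermitian
    fun x hx => hf x (hpos.isStrictlyPositive.spectrum_pos hx)).comp_hasDerivWithinAt t hgen
    fun s hs => ((hT s hs).posDef hρ).isHermitian
  have hvalue : reTraceMul (cfc f' (T t ρ)) (-(A (T t ρ))) = -(fisherInfo A f' (T t ρ)) := by
    rw [reTraceMul_apply, fisherInfo, trace_mul_comm, neg_mul, trace_neg, map_neg]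
    rfl
  exact ((htrace.congr_deriv hvalue).sub_const _).congr hbregman (hbregman t ht)

theorem mfsi_iff_entropy_decay_general (hT0 : T 0 = LinearMap.id)
    (hT : ∀ t, 0 ≤ t → IsSymmetricMarkov (T t))
    (hgen : ∀ x t, 0 ≤ t → HasDerivWithinAt (fun s => T s x) (-(A (T t x))) (Set.Ici 0) t)
    (hE : IsFixedPointExpectation T E)
    (hf : ∀ x ∈ Set.Ioi (0 : ℝ), HasDerivAt f (f' x) x) (lam : ℝ) :
    (∀ ρ : Matrix (Fin n) (Fin n) ℂ, ρ.PosDef →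
        lam * (bregman f f' ρ (E ρ)).re ≤ fisherInfo A f' ρ) ↔
    (∀ ρ : Matrix (Fin n) (Fin n) ℂ, ρ.PosDef → ∀ t : ℝ, 0 ≤ t →
        (bregman f f' (T t ρ) (E ρ)).re ≤
          Real.exp (-lam * t) * (bregman f f' ρ (E ρ)).re) := by
  have hderiv (ρ : Matrix (Fin n) (Fin n) ℂ) (hρ : ρ.PosDef) (t : ℝ) (ht : 0 ≤ t) :=
    hasDerivWithinAt_re_bregman hT hρ (fun s hs => hE.map_apply s hs ρ) hf ht (hgen ρ t ht)
  have hid (ρ : Matrix (Fin n) (Fin n) ℂ) : T 0 ρ = ρ := by rw [hT0, LinearMap.id_apply]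
  constructor
  · intro hmfsi ρ hρ t ht
    have hdiss (s : ℝ) (hs : 0 ≤ s) :
        -(fisherInfo A f' (T s ρ)) ≤ -lam * (bregman f f' (T s ρ) (E ρ)).re := by
      have hmfsi_s := hmfsi (T s ρ) ((hT s hs).posDef hρ)
      rw [hE.apply_map s hs] at hmfsi_s
      linarith
    simpa only [hid] using le_exp_mul_of_deriv_right_le (hderiv ρ hρ) hdiss ht
  · intro hdecay ρ hρ
    have hzero := deriv_right_le_of_le_exp_mul (hderiv ρ hρ 0 le_rfl)
      (by simpa only [hid] using hdecay ρ hρ)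
    rw [hid] at hzero
    linarith

end EntropyDecay

/-- for a semigroup `T_t = e^{-tA}` of self-adjoint unital trace-preserving
completely positive maps with fixed-point conditional expectation `E`, C¹
`f : (0,∞) → (0,∞)` and `λ > 0`, the modified `f`-Sobolev inequality
`λ d^f(ρ‖E ρ) ≤ I_A^f(ρ)` is equivalent to the exponential entropy decay
`d^f(T_t ρ‖E ρ) ≤ e^{-λt} d^f(ρ‖E ρ)`. -/
theorem mfsi_iff_entropy_decay {n : ℕ}
    (T : ℝ → (Matrix (Fin n) (Fin n) ℂ →ₗ[ℂ] Matrix (Fin n) (Fin n) ℂ))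
    (A : Matrix (Fin n) (Fin n) ℂ →ₗ[ℂ] Matrix (Fin n) (Fin n) ℂ)
    (E : Matrix (Fin n) (Fin n) ℂ →ₗ[ℂ] Matrix (Fin n) (Fin n) ℂ)
    (hT0 : T 0 = LinearMap.id)
    (hTsem : ∀ s t : ℝ, 0 ≤ s → 0 ≤ t → ∀ x, T (s + t) x = T s (T t x))
    (hTcp : ∀ t : ℝ, 0 ≤ t → IsCP (T t))
    (hTunital : ∀ t : ℝ, 0 ≤ t → T t 1 = 1)
    (hTtr : ∀ t : ℝ, 0 ≤ t → ∀ x, (T t x).trace = x.trace)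
    (hTsa : ∀ t : ℝ, 0 ≤ t → ∀ x y, (star (T t x) * y).trace = (star x * T t y).trace)
    (hgen : ∀ (x : Matrix (Fin n) (Fin n) ℂ) (t : ℝ), 0 ≤ t → ∀ i j,
      HasDerivAt (fun s : ℝ => (T s x) i j) (-(A (T t x)) i j) t)
    (hTE : ∀ t : ℝ, 0 ≤ t → ∀ x, T t (E x) = E x)
    (hET : ∀ t : ℝ, 0 ≤ t → ∀ x, E (T t x) = E x)
    (hEfix : ∀ x, (∀ t : ℝ, 0 ≤ t → T t x = x) → E x = x)
    (f f' : ℝ → ℝ)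
    (hf_pos : ∀ x ∈ Set.Ioi (0 : ℝ), 0 < f x)
    (hf_deriv : ∀ x ∈ Set.Ioi (0 : ℝ), HasDerivAt f (f' x) x)
    (hf'_cont : ContinuousOn f' (Set.Ioi 0))
    (lam : ℝ) (hlam : 0 < lam) :
    (∀ (ρ : Matrix (Fin n) (Fin n) ℂ), ρ.PosDef →
        lam * (bregman f f' ρ (E ρ)).re ≤ fisherInfo A f' ρ) ↔
    (∀ (ρ : Matrix (Fin n) (Fin n) ℂ), ρ.PosDef → ∀ t : ℝ, 0 ≤ t →
        (bregman f f' (T t ρ) (E ρ)).re ≤ Real.exp (-lam * t) * (bregman f f' ρ (E ρ)).re) :=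
  mfsi_iff_entropy_decay_general hT0
    (fun t ht => ⟨fun _ => (hTcp t ht).posSemidef, hTunital t ht, hTsa t ht⟩)
    (fun x t ht => HasDerivAt.hasDerivWithinAt <|
      hasDerivAt_pi.mpr fun i => hasDerivAt_pi.mpr (hgen x t ht i))
    ⟨hTE, hET, hEfix⟩ hf_deriv lam
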